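/- Let G be a finite undirected simple graph with n vertices that is a forest (contains no cycles), and let ℓ be a degree labeling of G, i.e., a bijection ℓ : V → {1, …, n} arising from an enumeration u_1, …, u_n of V with ℓ(u_i) = i such that for each i, the vertex u_i has minimum degree in the subgraph induced by {u_i, u_{i+1}, …, u_n}. Then the set of initial valid triplets is empty: there is no triplet ⟨x, u, y⟩ with x, y ∈ Adj(u), ℓ(u) < ℓ(x) < ℓ(y), and (x, y) ∉ E. -/

import Mathlib

theorem aux_long {V : Type*} (G : SimpleGraph V) (hG : G.IsAcyclic) (S : Set V)
    (hS : ∀ v ∈ S, ∀ z, ∃ w ∈ S, G.Adj v w ∧ w ≠ z) (a : V) (ha : a ∈ S) (n : ℕ) :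
    ∃ v ∈ S, ∃ p : G.Walk v a, p.IsPath ∧ p.length = n := by
  induction n with
  | zero => exact ⟨a, ha, SimpleGraph.Walk.nil, by simp, rfl⟩
  | succ n ih =>
    obtain ⟨v, hv, p, hp, hl⟩ := ih
    obtain ⟨w, hw, hvw, hne⟩ := hS v hv p.snd
    refine ⟨w, hw, SimpleGraph.Walk.cons hvw.symm p, ?_, by simp [hl]⟩
    rw [SimpleGraph.Walk.cons_isPath_iff]
    exact ⟨hp, fun hm => hne (hG.eq_snd_of_adj_start hp hvw hm)⟩

/-- Let G be a finite forest (acyclic graph) and let ℓ be a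
degree labeling of G, arising from an enumeration e : Fin n ≃ V (u_i = e i,
ℓ(u_i) = i, so ℓ = e.symm) in which each u_i has minimum degree in the subgraph
induced by {u_i, …, u_n}. Then there is no initial valid triplet ⟨x, u, y⟩,
i.e. no x, u, y with x, y ∈ Adj(u), ℓ(u) < ℓ(x) < ℓ(y) and (x, y) ∉ E. -/
theorem stmt12 {V : Type*} [Fintype V] (G : SimpleGraph V) (hG : G.IsAcyclic)
    (e : Fin (Fintype.card V) ≃ V)
    (hdeg : ∀ i j : Fin (Fintype.card V), i ≤ j →
      {w | (∃ m, i ≤ m ∧ e m = w) ∧ G.Adj (e i) w}.ncard ≤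
      {w | (∃ m, i ≤ m ∧ e m = w) ∧ G.Adj (e j) w}.ncard) :
    ¬ ∃ x u y : V, G.Adj u x ∧ G.Adj u y ∧
        e.symm u < e.symm x ∧ e.symm x < e.symm y ∧ ¬ G.Adj x y := by
  rintro ⟨x, u, y, hx, hy, h1, h2, -⟩
  have key := hdeg (e.symm u)
  obtain ⟨v, -, p, hp, hl⟩ := aux_long G hG {w | ∃ m, e.symm u ≤ m ∧ e m = w} (by
    rintro v ⟨j, hj, rfl⟩ z
    have h := key j hj
    have h3 : 1 < {w | (∃ m, e.symm u ≤ m ∧ e m = w) ∧ G.Adj (e (e.symm u)) w}.ncard := by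
      rw [Set.one_lt_ncard (Set.toFinite _)]
      refine ⟨x, ⟨⟨e.symm x, h1.le, by simp⟩, by simpa using hx⟩,
        y, ⟨⟨e.symm y, (h1.trans h2).le, by simp⟩, by simpa using hy⟩, ?_⟩
      rintro rfl
      exact lt_irrefl _ h2
    obtain ⟨w, hw, hne⟩ := Set.exists_ne_of_one_lt_ncard (h3.trans_le h) z
    exact ⟨w, hw.1, hw.2, hne⟩) u ⟨e.symm u, le_rfl, by simp⟩ (Fintype.card V)
  have := hp.length_lt
  omega
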